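/- Let M be a loopless matroid of rank r ≥ 1 on a finite ground set E, and let P be a polymatroid on E whose base polytope B(P) ⊆ ℝ^E is full dimensional, i.e., the affine hull of B(P) has dimension |E|−1. Then, in the Chow ring A(M)_ℚ, the divisor class D = Σ_{F nonempty flat of M} (rk_P(E∖F) − rk_P(E))·z_F satisfies D^{r−1} ≠ 0. -/

import Mathlib

open Finset

attribute [local instance] Classical.propDecidable

/-- The rank-function axioms of a polymatroid on a finite ground set. -/
def IsPolymatroid {α : Type*} [Fintype α] [DecidableEq α] (rk : Finset α → ℕ) : Prop :=
  rk ∅ = 0 ∧ (∀ I J : Finset α, I ⊆ J → rk I ≤ rk J) ∧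
    ∀ I J : Finset α, rk (I ∩ J) + rk (I ∪ J) ≤ rk I + rk J

/-- The base polytope `B(P)` of a polymatroid. -/
def basePolytope {α : Type*} [Fintype α] (rk : Finset α → ℕ) : Set (α → ℝ) :=
  {x | (∀ i, 0 ≤ x i) ∧ (∑ i, x i) = (rk Finset.univ : ℝ) ∧
      ∀ I : Finset α, (∑ i ∈ I, x i) ≤ (rk I : ℝ)}

/-- The rank-function axioms of a matroid on a finite ground set: a matroid is a polymatroid
with cage `(1, …, 1)`. -/
def IsMatroidRank {α : Type*} [Fintype α] [DecidableEq α] (rk : Finset α → ℕ) : Prop :=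
  rk ∅ = 0 ∧ (∀ I J : Finset α, I ⊆ J → rk I ≤ rk J) ∧
    (∀ I J : Finset α, rk (I ∩ J) + rk (I ∪ J) ≤ rk I + rk J) ∧
    ∀ e : α, rk {e} ≤ 1

/-- A flat of a matroid: a subset closed under the closure operator. -/
def IsFlat {α : Type*} [Fintype α] [DecidableEq α] (rk : Finset α → ℕ) (F : Finset α) : Prop :=
  ∀ e : α, rk (insert e F) = rk F → e ∈ F

/-- The nonempty flats of a matroid, indexing the Chow ring generators `z_F`. -/
def NonemptyFlat {α : Type*} [Fintype α] [DecidableEq α] (rk : Finset α → ℕ) : Type _ :=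
  {F : Finset α // F.Nonempty ∧ IsFlat rk F}

noncomputable instance {α : Type*} [Fintype α] [DecidableEq α] (rk : Finset α → ℕ) :
    Fintype (NonemptyFlat rk) :=
  Fintype.ofFinite {F : Finset α // F.Nonempty ∧ IsFlat rk F}

/-- The defining ideal of the Chow ring of a matroid (with rational coefficients): generated
by the products `z_F z_{F'}` over incomparable pairs of nonempty flats, and the linear forms
`Σ_{F ∋ i} z_F` for ground set elements `i`. -/
noncomputable def chowIdealQ {α : Type*} [Fintype α] [DecidableEq α] (rk : Finset α → ℕ) :
    Ideal (MvPolynomial (NonemptyFlat rk) ℚ) :=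
  Ideal.span
    ({p | ∃ F F' : NonemptyFlat rk, ¬F.1 ⊆ F'.1 ∧ ¬F'.1 ⊆ F.1 ∧
        p = MvPolynomial.X F * MvPolynomial.X F'} ∪
      {p | ∃ i : α,
        p = ∑ F : NonemptyFlat rk, if i ∈ F.1 then MvPolynomial.X F else 0})

/-! ### Matroid basics -/

theorem flat_lt {α : Type} [Fintype α] [DecidableEq α] {rk : Finset α → ℕ}
    (hM : IsMatroidRank rk) {F X : Finset α} (hF : IsFlat rk F) (h : F ⊂ X) : rk F < rk X := by
  obtain ⟨hs, hn⟩ := Finset.ssubset_iff_subset_ne.1 h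
  obtain ⟨e, heX, heF⟩ := Finset.exists_of_ssubset h
  have h1 : rk F ≤ rk (insert e F) := hM.2.1 _ _ (Finset.subset_insert _ _)
  have h2 : rk (insert e F) ≤ rk X := hM.2.1 _ _ (Finset.insert_subset heX hs)
  rcases Nat.lt_or_ge (rk F) (rk X) with h3 | h3
  · exact h3
  · exact absurd (hF e (by omega)) heF

theorem flat_inter_aux {α : Type} [Fintype α] [DecidableEq α] {rk : Finset α → ℕ}
    (hM : IsMatroidRank rk) {F G : Finset α} (hF : IsFlat rk F) (e : α)
    (he : rk (insert e (F ∩ G)) = rk (F ∩ G)) : e ∈ F := by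
  apply hF
  have h1 := hM.2.2.1 F (insert e (F ∩ G))
  have h2 : rk (F ∩ G) ≤ rk (F ∩ insert e (F ∩ G)) := hM.2.1 _ _ (by
    intro x hx
    simp only [Finset.mem_inter, Finset.mem_insert] at hx ⊢
    tauto)
  have h3 : F ∪ insert e (F ∩ G) = insert e F := by
    ext x
    simp only [Finset.mem_inter, Finset.mem_insert, Finset.mem_union]
    tauto
  rw [h3] at h1
  have h4 : rk F ≤ rk (insert e F) := hM.2.1 _ _ (Finset.subset_insert _ _)
  omega

theorem flat_inter {α : Type} [Fintype α] [DecidableEq α] {rk : Finset α → ℕ}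
    (hM : IsMatroidRank rk) {F G : Finset α} (hF : IsFlat rk F) (hG : IsFlat rk G) :
    IsFlat rk (F ∩ G) := by
  intro e he
  refine Finset.mem_inter.2 ⟨flat_inter_aux hM hF e he, ?_⟩
  rw [Finset.inter_comm] at he
  exact flat_inter_aux hM hG e he

theorem exists_closure {α : Type} [Fintype α] [DecidableEq α] {rk : Finset α → ℕ}
    (hM : IsMatroidRank rk) (X : Finset α) :
    ∃ K, IsFlat rk K ∧ X ⊆ K ∧ rk K = rk X ∧ ∀ F, IsFlat rk F → X ⊆ F → K ⊆ F := by
  obtain ⟨K, hK, hmax⟩ := Finset.exists_max_image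
    (Finset.univ.filter fun Y : Finset α => X ⊆ Y ∧ rk Y = rk X) Finset.card
    ⟨X, by simp⟩
  simp only [Finset.mem_filter, Finset.mem_univ, true_and] at hK hmax
  have hflat : IsFlat rk K := by
    intro e he
    by_contra hne
    have := hmax (insert e K) ⟨hK.1.trans (Finset.subset_insert _ _), he.trans hK.2⟩
    rw [Finset.card_insert_of_notMem hne] at this
    omega
  refine ⟨K, hflat, hK.1, hK.2, fun F hF hXF => ?_⟩
  by_contra hn
  have h1 : F ∩ K ⊂ K := by
    refine Finset.ssubset_iff_subset_ne.2 ⟨Finset.inter_subset_right, fun h => hn ?_⟩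
    rw [← h]; exact Finset.inter_subset_left
  have h2 := flat_lt hM (flat_inter hM hF hflat) h1
  have h3 : rk X ≤ rk (F ∩ K) := hM.2.1 _ _ (Finset.subset_inter hXF hK.1)
  omega

theorem exists_avoid {α : Type} [DecidableEq α] (C : Finset (Finset α)) (X : Finset α)
    (hX : X.Nonempty) (hC : ∀ S ∈ C, ∀ T ∈ C, S ⊆ T ∨ T ⊆ S) (hs : ∀ S ∈ C, S ⊂ X) :
    ∃ e ∈ X, ∀ S ∈ C, e ∉ S := by
  rcases C.eq_empty_or_nonempty with rfl | hne
  · obtain ⟨e, he⟩ := hX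
    exact ⟨e, he, by simp⟩
  · obtain ⟨T, hT, hmax⟩ := Finset.exists_max_image C Finset.card hne
    obtain ⟨e, heX, heT⟩ := Finset.exists_of_ssubset (hs T hT)
    refine ⟨e, heX, fun S hS heS => ?_⟩
    rcases hC S hS T hT with h | h
    · exact heT (h heS)
    · have := Finset.eq_of_subset_of_card_le h (hmax S hS)
      subst this; exact heT heS

theorem greedy {α : Type} [Fintype α] [DecidableEq α] {rkP : Finset α → ℕ}
    (hP : IsPolymatroid rkP) : ∀ (n : ℕ) (U : Finset α) (_ : U.card = n)
    (C : Finset (Finset α)) (_ : ∀ S ∈ C, ∀ T ∈ C, S ⊆ T ∨ T ⊆ S) (_ : ∀ S ∈ C, S ⊆ U),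
    ∃ x : α → ℤ, (∀ I, I ⊆ U → ∑ i ∈ I, x i ≤ rkP I) ∧ (∀ S ∈ C, ∑ i ∈ S, x i = rkP S) ∧
      ∑ i ∈ U, x i = rkP U := by
  intro n
  induction n with
  | zero =>
    intro U hU C _ hCU
    obtain rfl := Finset.card_eq_zero.1 hU
    refine ⟨fun _ => 0, ?_, ?_, ?_⟩
    · intro I _; simp
    · intro S hS
      have := Finset.subset_empty.1 (hCU S hS)
      subst this
      simp [hP.1]
    · simp [hP.1]
  | succ n ih =>
    intro U hU C hC hCU
    have hUne : U.Nonempty := Finset.card_pos.1 (by omega)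
    obtain ⟨e, heU, he⟩ := exists_avoid (C.erase U) U hUne
      (fun S hS T hT => hC S (Finset.mem_of_mem_erase hS) T (Finset.mem_of_mem_erase hT))
      (fun S hS => Finset.ssubset_iff_subset_ne.2
        ⟨hCU S (Finset.mem_of_mem_erase hS), Finset.ne_of_mem_erase hS⟩)
    obtain ⟨x, hx1, hx2, hx3⟩ := ih (U.erase e) (by rw [Finset.card_erase_of_mem heU]; omega)
      (C.erase U)
      (fun S hS T hT => hC S (Finset.mem_of_mem_erase hS) T (Finset.mem_of_mem_erase hT))
      (fun S hS => Finset.subset_erase.2 ⟨hCU S (Finset.mem_of_mem_erase hS), he S hS⟩)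
    set y : α → ℤ := Function.update x e ((rkP U : ℤ) - rkP (U.erase e)) with hy
    have hout : ∀ I : Finset α, e ∉ I → ∑ i ∈ I, y i = ∑ i ∈ I, x i := by
      intro I hI
      refine Finset.sum_congr rfl fun i hi => ?_
      rw [hy, Function.update_of_ne]
      rintro rfl; exact hI hi
    have hin : ∀ I : Finset α, e ∈ I →
        ∑ i ∈ I, y i = ∑ i ∈ I.erase e, x i + ((rkP U : ℤ) - rkP (U.erase e)) := by
      intro I hI
      rw [← Finset.sum_erase_add _ _ hI, hout _ (Finset.notMem_erase _ _)]
      simp [hy]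
    have hUU : ∑ i ∈ U, y i = rkP U := by
      rw [hin U heU, hx3]; ring
    refine ⟨y, ?_, ?_, hUU⟩
    · intro I hI
      by_cases heI : e ∈ I
      · rw [hin I heI]
        have h1 := hx1 (I.erase e) (Finset.erase_subset_erase e hI)
        have h2 := hP.2.2 I (U.erase e)
        have h3 : I ∩ U.erase e = I.erase e := by
          ext a
          simp only [Finset.mem_inter, Finset.mem_erase]
          constructor
          · tauto
          · intro h; exact ⟨h.2, h.1, hI h.2⟩
        have h4 : I ∪ U.erase e = U := by
          ext a
          simp only [Finset.mem_union, Finset.mem_erase]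
          constructor
          · rintro (h | h)
            · exact hI h
            · exact h.2
          · intro h
            by_cases hae : a = e
            · subst hae; exact Or.inl heI
            · exact Or.inr ⟨hae, h⟩
        rw [h3, h4] at h2
        omega
      · rw [hout I heI]
        exact hx1 I (Finset.subset_erase.2 ⟨hI, heI⟩)
    · intro S hS
      by_cases hSU : S = U
      · rw [hSU]; exact hUU
      · have : S ∈ C.erase U := Finset.mem_erase.2 ⟨hSU, hS⟩
        rw [hout S (he S this)]
        exact hx2 S this

theorem greedy_univ {α : Type} [Fintype α] [DecidableEq α] {rkP : Finset α → ℕ}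
    (hP : IsPolymatroid rkP) (C : Finset (Finset α))
    (hC : ∀ S ∈ C, ∀ T ∈ C, S ⊆ T ∨ T ⊆ S) :
    ∃ x : α → ℤ, (∀ F : Finset α, 0 ≤ (rkP (Finset.univ \ F) : ℤ) - rkP Finset.univ + ∑ i ∈ F, x i) ∧
      (∀ F ∈ C, (rkP (Finset.univ \ F) : ℤ) - rkP Finset.univ + ∑ i ∈ F, x i = 0) ∧
      ∑ i, x i = rkP Finset.univ := by
  obtain ⟨x, h1, h2, h3⟩ := greedy hP _ Finset.univ rfl (C.image fun F => Finset.univ \ F)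
    (by
      intro S hS T hT
      obtain ⟨S', hS', rfl⟩ := Finset.mem_image.1 hS
      obtain ⟨T', hT', rfl⟩ := Finset.mem_image.1 hT
      rcases hC S' hS' T' hT' with h | h
      · exact Or.inr (Finset.sdiff_subset_sdiff (Finset.Subset.refl _) h)
      · exact Or.inl (Finset.sdiff_subset_sdiff (Finset.Subset.refl _) h))
    (fun S _ => Finset.subset_univ S)
  have hsum : ∀ F : Finset α, ∑ i ∈ Finset.univ \ F, x i + ∑ i ∈ F, x i = rkP Finset.univ := by
    intro F
    rw [← h3]
    exact Finset.sum_sdiff (Finset.subset_univ F)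
  refine ⟨x, ?_, ?_, h3⟩
  · intro F
    have := h1 (Finset.univ \ F) (Finset.subset_univ _)
    have := hsum F
    omega
  · intro F hF
    have := h2 (Finset.univ \ F) (Finset.mem_image_of_mem _ hF)
    have := hsum F
    omega

/-! ### Full dimensionality gives strict inequalities -/

theorem full_strict {α : Type} [Fintype α] [DecidableEq α] {rkP : Finset α → ℕ}
    (hfull : Module.finrank ℝ (affineSpan ℝ (basePolytope rkP)).direction =
      Fintype.card α - 1) (S : Finset α) (hS : S.Nonempty) (hS' : S ≠ Finset.univ) :
    rkP Finset.univ < rkP S + rkP (Finset.univ \ S) := by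
  by_contra hcon
  have heq : rkP S + rkP (Finset.univ \ S) ≤ rkP Finset.univ := not_lt.1 hcon
  obtain ⟨a, ha⟩ := hS
  obtain ⟨b, hb⟩ : ∃ b, b ∉ S := by
    by_contra h
    push Not at h
    exact hS' (Finset.eq_univ_iff_forall.2 h)
  have hS1 : ∀ x ∈ basePolytope rkP, ∑ i ∈ S, x i = rkP S := by
    rintro x ⟨_, h2, h3⟩
    have h4 := h3 S
    have h5 := h3 (Finset.univ \ S)
    have h6 : ∑ i ∈ Finset.univ \ S, x i + ∑ i ∈ S, x i = rkP Finset.univ := by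
      rw [← h2]; exact Finset.sum_sdiff (Finset.subset_univ S)
    have h7 : (rkP S : ℝ) + rkP (Finset.univ \ S) ≤ rkP Finset.univ := by exact_mod_cast heq
    linarith
  let f : (α → ℝ) →ₗ[ℝ] (Fin 2 → ℝ) :=
    LinearMap.pi ![∑ i ∈ S, LinearMap.proj i, ∑ i ∈ Finset.univ \ S, LinearMap.proj i]
  have hf0 : ∀ x, f x 0 = ∑ i ∈ S, x i := by intro x; simp [f]
  have hf1 : ∀ x, f x 1 = ∑ i ∈ Finset.univ \ S, x i := by intro x; simp [f]
  have hsurj : Function.Surjective f := by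
    intro v
    refine ⟨Pi.single a (v 0) + Pi.single b (v 1), ?_⟩
    ext j
    fin_cases j
    · simp only [Fin.zero_eta, hf0, Pi.add_apply, Finset.sum_add_distrib]
      simp [ha, hb]
    · simp only [Fin.mk_one, hf1, Pi.add_apply, Finset.sum_add_distrib]
      simp [ha, hb]
  have hle : (affineSpan ℝ (basePolytope rkP)).direction ≤ LinearMap.ker f := by
    rw [direction_affineSpan, vectorSpan_def, Submodule.span_le]
    rintro _ ⟨x, hx, y, hy, rfl⟩
    have e1 := hS1 x hx
    have e2 := hS1 y hy
    have e3 : ∑ i ∈ Finset.univ \ S, x i + ∑ i ∈ S, x i = rkP Finset.univ := by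
      rw [← hx.2.1]; exact Finset.sum_sdiff (Finset.subset_univ S)
    have e4 : ∑ i ∈ Finset.univ \ S, y i + ∑ i ∈ S, y i = rkP Finset.univ := by
      rw [← hy.2.1]; exact Finset.sum_sdiff (Finset.subset_univ S)
    simp only [SetLike.mem_coe, LinearMap.mem_ker]
    ext j
    fin_cases j
    · simp only [Fin.zero_eta, hf0, vsub_eq_sub, Pi.sub_apply, Finset.sum_sub_distrib, Pi.zero_apply]
      linarith
    · simp only [Fin.mk_one, hf1, vsub_eq_sub, Pi.sub_apply, Finset.sum_sub_distrib, Pi.zero_apply]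
      linarith
  have h1 := Submodule.finrank_mono hle
  have h2 := LinearMap.finrank_range_add_finrank_ker f
  rw [LinearMap.range_eq_top.2 hsurj, finrank_top] at h2
  simp only [Module.finrank_fintype_fun_eq_card, Fintype.card_fin] at h2
  omega

/-! ### The degree functional (dragon Hall-Rado condition) -/

/-- The dragon Hall-Rado condition on an exponent vector. -/
def DHR {α : Type} [Fintype α] [DecidableEq α] (rk : Finset α → ℕ)
    (m : NonemptyFlat rk →₀ ℕ) : Prop :=
  ∀ A : Finset (NonemptyFlat rk), A.Nonempty →
    ∑ F ∈ A, m F + 1 ≤ rk (A.biUnion fun F => F.1)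

theorem sum_add_single {σ : Type} (A : Finset σ) (m : σ →₀ ℕ) (X : σ) :
    ∑ F ∈ A, (m + Finsupp.single X 1 : σ →₀ ℕ) F = ∑ F ∈ A, m F + if X ∈ A then 1 else 0 := by
  simp only [Finsupp.add_apply, Finset.sum_add_distrib]
  congr 1
  by_cases h : X ∈ A
  · rw [if_pos h, Finset.sum_eq_single_of_mem X h]
    · simp
    · intro b _ hb
      exact Finsupp.single_eq_of_ne hb
  · rw [if_neg h]
    apply Finset.sum_eq_zero
    intro b hb
    apply Finsupp.single_eq_of_ne
    rintro rfl; exact h hb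

theorem DHR_mono {α : Type} [Fintype α] [DecidableEq α] {rk : Finset α → ℕ}
    (m : NonemptyFlat rk →₀ ℕ) (X Y : NonemptyFlat rk) (hXY : X.1 ⊆ Y.1)
    (h : DHR rk (m + Finsupp.single X 1)) : DHR rk (m + Finsupp.single Y 1) := by
  intro A hA
  rw [sum_add_single]
  by_cases hY : Y ∈ A
  · have h1 := h (insert X A) (Finset.insert_nonempty _ _)
    rw [sum_add_single, if_pos (Finset.mem_insert_self _ _)] at h1
    have h2 : ((insert X A).biUnion fun F => F.1) = A.biUnion fun F => F.1 := by
      rw [Finset.biUnion_insert]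
      exact Finset.union_eq_right.2 (hXY.trans (Finset.subset_biUnion_of_mem (fun F => F.1) hY))
    rw [h2] at h1
    have h3 : ∑ F ∈ A, m F ≤ ∑ F ∈ insert X A, m F :=
      Finset.sum_le_sum_of_subset (Finset.subset_insert _ _)
    rw [if_pos hY]
    omega
  · have h1 := h A hA
    rw [sum_add_single] at h1
    rw [if_neg hY]
    omega

theorem rk_union_join {α : Type} [Fintype α] [DecidableEq α] {rk : Finset α → ℕ}
    (hM : IsMatroidRank rk) {F G K X : Finset α} (hF : F ⊆ K) (hG : G ⊆ K)
    (hK : rk K = rk (F ∪ G)) (hFX : F ⊆ X) (hGX : G ⊆ X) : rk (K ∪ X) = rk X := by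
  have h1 := hM.2.2.1 K X
  have h2 : rk (F ∪ G) ≤ rk (K ∩ X) := hM.2.1 _ _
    (Finset.subset_inter (Finset.union_subset hF hG) (Finset.union_subset hFX hGX))
  have h3 : rk X ≤ rk (K ∪ X) := hM.2.1 _ _ Finset.subset_union_right
  omega

theorem ite_rel (a b c d : Prop) (m1 : a → b) (m2 : a → c) (m3 : b → d) (m4 : c → d)
    (m5 : b → c → a) (m6 : d → b ∨ c) :
    ((if a then (1 : ℚ) else 0) - (if b then (1 : ℚ) else 0) - (if c then (1 : ℚ) else 0)
      + (if d then (1 : ℚ) else 0)) = 0 := by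
  by_cases c1 : a <;> by_cases c2 : b <;> by_cases c3 : c <;> by_cases c4 : d <;>
  first
  | (exfalso; tauto)
  | (simp only [c1, c2, c3, c4, if_true, if_false]; norm_num)

theorem DHR_relation {α : Type} [Fintype α] [DecidableEq α] {rk : Finset α → ℕ}
    (hM : IsMatroidRank rk) (m : NonemptyFlat rk →₀ ℕ) (F G K : NonemptyFlat rk)
    (hF : F.1 ⊆ K.1) (hG : G.1 ⊆ K.1) (hK : rk K.1 = rk (F.1 ∪ G.1)) :
    ((if DHR rk (m + Finsupp.single F 1 + Finsupp.single G 1) then (1 : ℚ) else 0)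
      - (if DHR rk (m + Finsupp.single F 1 + Finsupp.single K 1) then (1 : ℚ) else 0)
      - (if DHR rk (m + Finsupp.single G 1 + Finsupp.single K 1) then (1 : ℚ) else 0)
      + (if DHR rk (m + Finsupp.single K 1 + Finsupp.single K 1) then (1 : ℚ) else 0)) = 0 := by
  have m1 : DHR rk (m + Finsupp.single F 1 + Finsupp.single G 1) →
      DHR rk (m + Finsupp.single F 1 + Finsupp.single K 1) := DHR_mono _ _ _ hG
  have m2 : DHR rk (m + Finsupp.single F 1 + Finsupp.single G 1) →
      DHR rk (m + Finsupp.single G 1 + Finsupp.single K 1) := by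
    intro h
    rw [add_right_comm] at h
    exact DHR_mono _ _ _ hF h
  have m3 : DHR rk (m + Finsupp.single F 1 + Finsupp.single K 1) →
      DHR rk (m + Finsupp.single K 1 + Finsupp.single K 1) := by
    intro h
    rw [add_right_comm] at h
    exact DHR_mono _ _ _ hF h
  have m4 : DHR rk (m + Finsupp.single G 1 + Finsupp.single K 1) →
      DHR rk (m + Finsupp.single K 1 + Finsupp.single K 1) := by
    intro h
    rw [add_right_comm] at h
    exact DHR_mono _ _ _ hG h
  have hjoin : ∀ A : Finset (NonemptyFlat rk), F ∈ A → G ∈ A →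
      DHR rk (m + Finsupp.single K 1 + Finsupp.single K 1) →
      ∑ F ∈ A, m F + 3 ≤ rk (A.biUnion fun F => F.1) := by
    intro A hFA hGA h
    have h1 := h (insert K A) (Finset.insert_nonempty _ _)
    rw [sum_add_single, sum_add_single, if_pos (Finset.mem_insert_self _ _),
      Finset.biUnion_insert, rk_union_join hM hF hG hK
        (Finset.subset_biUnion_of_mem (fun F : NonemptyFlat rk => F.1) hFA)
        (Finset.subset_biUnion_of_mem (fun F : NonemptyFlat rk => F.1) hGA)] at h1
    have h3 : ∑ F ∈ A, m F ≤ ∑ F ∈ insert K A, m F :=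
      Finset.sum_le_sum_of_subset (Finset.subset_insert _ _)
    omega
  have m5 : DHR rk (m + Finsupp.single F 1 + Finsupp.single K 1) →
      DHR rk (m + Finsupp.single G 1 + Finsupp.single K 1) →
      DHR rk (m + Finsupp.single F 1 + Finsupp.single G 1) := by
    intro h1 h2 A hA
    have hKK := m3 h1
    have a1 := h1 A hA
    have a2 := h2 A hA
    simp only [sum_add_single] at a1 a2 ⊢
    by_cases hFA : F ∈ A
    · by_cases hGA : G ∈ A
      · have := hjoin A hFA hGA hKK
        simp only [if_pos hFA, if_pos hGA]; omega
      · simp only [if_neg hGA]; omega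
    · simp only [if_neg hFA]; omega
  have viol : ∀ F' : NonemptyFlat rk, DHR rk (m + Finsupp.single K 1 + Finsupp.single K 1) →
      ¬ DHR rk (m + Finsupp.single F' 1 + Finsupp.single K 1) →
      ∃ A, F' ∈ A ∧ rk (A.biUnion fun F => F.1) ≤ ∑ F ∈ A, m F + 1 := by
    intro F' h h'
    unfold DHR at h'
    push Not at h'
    obtain ⟨A, hA, hlt⟩ := h'
    have a1 := h A hA
    simp only [sum_add_single] at a1 hlt
    refine ⟨A, ?_, ?_⟩
    · by_contra hc
      rw [if_neg hc] at hlt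
      omega
    · by_cases hKA : K ∈ A
      · simp only [if_pos hKA] at a1 hlt
        split_ifs at hlt <;> omega
      · simp only [if_neg hKA] at a1 hlt
        split_ifs at hlt <;> omega
  have m6 : DHR rk (m + Finsupp.single K 1 + Finsupp.single K 1) →
      DHR rk (m + Finsupp.single F 1 + Finsupp.single K 1) ∨
      DHR rk (m + Finsupp.single G 1 + Finsupp.single K 1) := by
    intro h
    by_contra hc
    push Not at hc
    obtain ⟨A, hFA, hA⟩ := viol F h hc.1
    obtain ⟨B, hGB, hB⟩ := viol G h hc.2
    have h1 := hM.2.2.1 (A.biUnion fun F => F.1) (B.biUnion fun F => F.1)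
    have h2 := hjoin (A ∪ B) (Finset.mem_union_left _ hFA) (Finset.mem_union_right _ hGB) h
    have hu : ((A ∪ B).biUnion fun F => F.1) =
        (A.biUnion fun F => F.1) ∪ (B.biUnion fun F => F.1) := by
      ext x
      simp only [Finset.mem_biUnion, Finset.mem_union]
      constructor
      · rintro ⟨a, ha | ha, hx⟩
        · exact Or.inl ⟨a, ha, hx⟩
        · exact Or.inr ⟨a, ha, hx⟩
      · rintro (⟨a, ha, hx⟩ | ⟨a, ha, hx⟩)
        · exact ⟨a, Or.inl ha, hx⟩
        · exact ⟨a, Or.inr ha, hx⟩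
    rw [hu] at h2
    have h3 : ∑ F ∈ A ∪ B, m F + ∑ F ∈ A ∩ B, m F = ∑ F ∈ A, m F + ∑ F ∈ B, m F :=
      Finset.sum_union_inter
    have h4 : ∑ F ∈ A ∩ B, m F ≤ rk ((A.biUnion fun F => F.1) ∩ (B.biUnion fun F => F.1)) := by
      rcases (A ∩ B).eq_empty_or_nonempty with he | hne
      · rw [he]; simp
      · have h5 := h (A ∩ B) hne
        simp only [sum_add_single] at h5
        have h6 : rk ((A ∩ B).biUnion fun F => F.1) ≤
            rk ((A.biUnion fun F => F.1) ∩ (B.biUnion fun F => F.1)) := by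
          apply hM.2.1
          intro x hx
          obtain ⟨a, ha, hx⟩ := Finset.mem_biUnion.1 hx
          rw [Finset.mem_inter] at ha
          exact Finset.mem_inter.2 ⟨Finset.mem_biUnion.2 ⟨a, ha.1, hx⟩,
            Finset.mem_biUnion.2 ⟨a, ha.2, hx⟩⟩
        omega
    omega
  exact ite_rel _ _ _ _ m1 m2 m3 m4 m5 m6

/-- The degree functional in the `h`-variables. -/
noncomputable def degH {α : Type} [Fintype α] [DecidableEq α] (rk : Finset α → ℕ) :
    MvPolynomial (NonemptyFlat rk) ℚ →ₗ[ℚ] ℚ :=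
  (MvPolynomial.basisMonomials (NonemptyFlat rk) ℚ).constr ℚ
    (fun m => if DHR rk m then (1 : ℚ) else 0)

theorem degH_monomial {α : Type} [Fintype α] [DecidableEq α] (rk : Finset α → ℕ)
    (m : NonemptyFlat rk →₀ ℕ) :
    degH rk (MvPolynomial.monomial m 1) = if DHR rk m then (1 : ℚ) else 0 := by
  have := (MvPolynomial.basisMonomials (NonemptyFlat rk) ℚ).constr_basis ℚ
    (fun m => if DHR rk m then (1 : ℚ) else 0) m
  rwa [MvPolynomial.coe_basisMonomials] at this

/-- The ideal of polynomials annihilated by the degree pairing. -/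
noncomputable def annH {α : Type} [Fintype α] [DecidableEq α] (rk : Finset α → ℕ) :
    Ideal (MvPolynomial (NonemptyFlat rk) ℚ) where
  carrier := {p | ∀ q, degH rk (q * p) = 0}
  add_mem' := by
    intro a b ha hb q
    rw [mul_add, map_add, ha q, hb q, add_zero]
  zero_mem' := by intro q; simp
  smul_mem' := by
    intro c x hx q
    rw [smul_eq_mul, ← mul_assoc]
    exact hx _

theorem mem_annH {α : Type} [Fintype α] [DecidableEq α] {rk : Finset α → ℕ}
    {p : MvPolynomial (NonemptyFlat rk) ℚ}
    (h : ∀ m, degH rk (MvPolynomial.monomial m 1 * p) = 0) : p ∈ annH rk := by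
  intro q
  induction q using MvPolynomial.induction_on' with
  | monomial u a =>
    have : (MvPolynomial.monomial u a : MvPolynomial (NonemptyFlat rk) ℚ) =
        a • MvPolynomial.monomial u 1 := by
      rw [MvPolynomial.smul_monomial, smul_eq_mul, mul_one]
    rw [this, smul_mul_assoc, map_smul, h u, smul_zero]
  | add p q hp hq => rw [add_mul, map_add, hp, hq, add_zero]

theorem atom_mem_annH {α : Type} [Fintype α] [DecidableEq α] {rk : Finset α → ℕ}
    (K : NonemptyFlat rk) (hK : rk K.1 = 1) : MvPolynomial.X K ∈ annH rk := by
  apply mem_annH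
  intro m
  have : (MvPolynomial.monomial m 1 * MvPolynomial.X K : MvPolynomial (NonemptyFlat rk) ℚ) =
      MvPolynomial.monomial (m + Finsupp.single K 1) 1 := by
    rw [MvPolynomial.X, MvPolynomial.monomial_mul, mul_one]
  rw [this, degH_monomial, if_neg]
  intro h
  have h1 := h {K} (Finset.singleton_nonempty _)
  rw [sum_add_single] at h1
  simp [hK] at h1

theorem relation_mem_annH {α : Type} [Fintype α] [DecidableEq α] {rk : Finset α → ℕ}
    (hM : IsMatroidRank rk) (F G K : NonemptyFlat rk)
    (hF : F.1 ⊆ K.1) (hG : G.1 ⊆ K.1) (hK : rk K.1 = rk (F.1 ∪ G.1)) :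
    (MvPolynomial.X F - MvPolynomial.X K) * (MvPolynomial.X G - MvPolynomial.X K) ∈ annH rk := by
  apply mem_annH
  intro m
  have key : ∀ X Y : NonemptyFlat rk,
      (MvPolynomial.monomial m 1 * MvPolynomial.X X * MvPolynomial.X Y :
        MvPolynomial (NonemptyFlat rk) ℚ) =
      MvPolynomial.monomial (m + Finsupp.single X 1 + Finsupp.single Y 1) 1 := by
    intro X Y
    rw [MvPolynomial.X, MvPolynomial.X, MvPolynomial.monomial_mul, MvPolynomial.monomial_mul,
      mul_one, mul_one]
  have expand : (MvPolynomial.monomial m 1 * ((MvPolynomial.X F - MvPolynomial.X K) *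
      (MvPolynomial.X G - MvPolynomial.X K)) : MvPolynomial (NonemptyFlat rk) ℚ) =
      MvPolynomial.monomial m 1 * MvPolynomial.X F * MvPolynomial.X G
      - MvPolynomial.monomial m 1 * MvPolynomial.X F * MvPolynomial.X K
      - MvPolynomial.monomial m 1 * MvPolynomial.X G * MvPolynomial.X K
      + MvPolynomial.monomial m 1 * MvPolynomial.X K * MvPolynomial.X K := by ring
  rw [expand, key, key, key, key, map_add, map_sub, map_sub, degH_monomial, degH_monomial,
    degH_monomial, degH_monomial]
  exact DHR_relation hM m F G K hF hG hK

/-- The images of the generators `z_F` in the `h`-variables (Möbius inversion). -/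
noncomputable def zz {α : Type} [Fintype α] [DecidableEq α] (rk : Finset α → ℕ)
    (F : NonemptyFlat rk) : MvPolynomial (NonemptyFlat rk) ℚ :=
  - MvPolynomial.X F - ∑ G : {G : NonemptyFlat rk // F.1 ⊂ G.1}, zz rk G.1
termination_by Fintype.card α - F.1.card
decreasing_by
  have h1 := Finset.card_lt_card G.2
  have h2 := Finset.card_le_univ G.1.1
  omega

theorem zz_sum {α : Type} [Fintype α] [DecidableEq α] (rk : Finset α → ℕ)
    (F : NonemptyFlat rk) :
    ∑ G : NonemptyFlat rk, (if F.1 ⊆ G.1 then zz rk G else 0) = - MvPolynomial.X F := by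
  have h1 : ∑ G : {G : NonemptyFlat rk // F.1 ⊂ G.1}, zz rk G.1 =
      ∑ G : NonemptyFlat rk, if F.1 ⊂ G.1 then zz rk G else 0 := by
    rw [← Finset.sum_filter]
    exact (Finset.sum_subtype (Finset.univ.filter fun G : NonemptyFlat rk => F.1 ⊂ G.1)
      (by simp) (fun G => zz rk G)).symm
  have h2 : ∑ G : NonemptyFlat rk, (if F.1 ⊆ G.1 then zz rk G else 0) =
      zz rk F + ∑ G : NonemptyFlat rk, if F.1 ⊂ G.1 then zz rk G else 0 := by
    have h3 : zz rk F = ∑ G : NonemptyFlat rk, if G = F then zz rk G else 0 := by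
      rw [Finset.sum_ite_eq' Finset.univ F]; simp
    rw [h3, ← Finset.sum_add_distrib]
    refine Finset.sum_congr rfl fun G _ => ?_
    by_cases hGF : G = F
    · subst hGF
      simp
    · have hne : F.1 ≠ G.1 := fun h => hGF (Subtype.ext h.symm)
      have : F.1 ⊂ G.1 ↔ F.1 ⊆ G.1 := by
        rw [Finset.ssubset_iff_subset_ne]; tauto
      simp only [hGF, this, if_false, zero_add]
  rw [h2, ← h1, zz]
  ring

theorem zz_incomp {α : Type} [Fintype α] [DecidableEq α] {rk : Finset α → ℕ}
    (hM : IsMatroidRank rk) : ∀ (n : ℕ) (F G : NonemptyFlat rk),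
    2 * Fintype.card α ≤ n + F.1.card + G.1.card → ¬ F.1 ⊆ G.1 → ¬ G.1 ⊆ F.1 →
      zz rk F * zz rk G ∈ annH rk := by
  intro n
  induction n with
  | zero =>
    intro F G hn h1 _
    have h3 := Finset.card_le_univ F.1
    have h4 := Finset.card_le_univ G.1
    have : G.1 = Finset.univ := Finset.card_eq_iff_eq_univ _ |>.1 (by omega)
    exact absurd (this ▸ Finset.subset_univ _) h1
  | succ n ih =>
    intro F G hn h1 h2
    obtain ⟨K', hKf, hKs, hKr, hKm⟩ := exists_closure hM (F.1 ∪ G.1)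
    obtain ⟨hFK, hGK⟩ := Finset.union_subset_iff.1 hKs
    let K : NonemptyFlat rk := ⟨K', F.2.1.mono hFK, hKf⟩
    have hrel := relation_mem_annH hM F G K hFK hGK hKr
    have hdiff : ∀ H : NonemptyFlat rk, H.1 ⊆ K.1 →
        (MvPolynomial.X H - MvPolynomial.X K : MvPolynomial (NonemptyFlat rk) ℚ) =
        - ∑ H' : NonemptyFlat rk, if H.1 ⊆ H'.1 ∧ ¬ K.1 ⊆ H'.1 then zz rk H' else 0 := by
      intro H hH
      have e1 := zz_sum rk H
      have e2 := zz_sum rk K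
      have e3 : ∑ H' : NonemptyFlat rk, (if H.1 ⊆ H'.1 ∧ ¬ K.1 ⊆ H'.1 then zz rk H' else 0) =
        ∑ H' : NonemptyFlat rk, (if H.1 ⊆ H'.1 then zz rk H' else 0) -
        ∑ H' : NonemptyFlat rk, (if K.1 ⊆ H'.1 then zz rk H' else 0) := by
        rw [← Finset.sum_sub_distrib]
        refine Finset.sum_congr rfl fun H' _ => ?_
        by_cases c1 : H.1 ⊆ H'.1 <;> by_cases c2 : K.1 ⊆ H'.1
        · simp [c1, c2]
        · simp [c1, c2]
        · exact absurd (hH.trans c2) c1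
        · simp [c1, c2]
      rw [e3, e1, e2]; ring
    rw [hdiff F hFK, hdiff G hGK, neg_mul_neg, Finset.sum_mul_sum, ← Finset.sum_product'] at hrel
    rw [← Finset.add_sum_erase _ _ (Finset.mem_product.2
      ⟨Finset.mem_univ F, Finset.mem_univ G⟩ : (F, G) ∈ _)] at hrel
    have hFG : F.1 ⊆ F.1 ∧ ¬ K.1 ⊆ F.1 := ⟨Finset.Subset.refl _, fun h => h2 (hGK.trans h)⟩
    have hGF : G.1 ⊆ G.1 ∧ ¬ K.1 ⊆ G.1 := ⟨Finset.Subset.refl _, fun h => h1 (hFK.trans h)⟩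
    simp only [if_pos hFG, if_pos hGF] at hrel
    refine (Ideal.add_mem_iff_left _ (Ideal.sum_mem _ ?_)).1 hrel
    rintro ⟨F', G'⟩ hne
    have hne' := Finset.ne_of_mem_erase hne
    dsimp only
    by_cases c1 : F.1 ⊆ F'.1 ∧ ¬ K.1 ⊆ F'.1
    · by_cases c2 : G.1 ⊆ G'.1 ∧ ¬ K.1 ⊆ G'.1
      · rw [if_pos c1, if_pos c2]
        have i1 : ¬ F'.1 ⊆ G'.1 := fun h =>
          c2.2 (hKm _ G'.2.2 (Finset.union_subset (c1.1.trans h) c2.1))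
        have i2 : ¬ G'.1 ⊆ F'.1 := fun h =>
          c1.2 (hKm _ F'.2.2 (Finset.union_subset c1.1 (c2.1.trans h)))
        refine ih F' G' ?_ i1 i2
        have l1 := Finset.card_le_card c1.1
        have l2 := Finset.card_le_card c2.1
        by_contra hc
        have q1 : F.1 = F'.1 := Finset.eq_of_subset_of_card_le c1.1 (by omega)
        have q2 : G.1 = G'.1 := Finset.eq_of_subset_of_card_le c2.1 (by omega)
        exact hne' (Prod.ext (Subtype.ext q1.symm) (Subtype.ext q2.symm))
      · rw [if_neg c2, mul_zero]; exact Ideal.zero_mem _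
    · rw [if_neg c1, zero_mul]; exact Ideal.zero_mem _

theorem chowIdeal_le {α : Type} [Fintype α] [DecidableEq α] {rk : Finset α → ℕ}
    (hM : IsMatroidRank rk) (hloopless : ∀ e : α, rk {e} = 1) :
    chowIdealQ rk ≤ (annH rk).comap (MvPolynomial.aeval (zz rk)) := by
  rw [chowIdealQ, Ideal.span_le]
  rintro p (⟨F, G, h1, h2, rfl⟩ | ⟨i, rfl⟩)
  · simp only [SetLike.mem_coe, Ideal.mem_comap, map_mul, MvPolynomial.aeval_X]
    exact zz_incomp hM (2 * Fintype.card α) F G (by omega) h1 h2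
  · simp only [SetLike.mem_coe, Ideal.mem_comap, map_sum]
    obtain ⟨K', hKf, hKs, hKr, hKm⟩ := exists_closure hM {i}
    have hiK : i ∈ K' := hKs (Finset.mem_singleton_self i)
    let K : NonemptyFlat rk := ⟨K', ⟨i, hiK⟩, hKf⟩
    have h := zz_sum rk K
    have h' : ∑ F : NonemptyFlat rk, (MvPolynomial.aeval (zz rk))
        (if i ∈ F.1 then (MvPolynomial.X F : MvPolynomial (NonemptyFlat rk) ℚ) else 0) =
        - MvPolynomial.X K := by
      rw [← h]
      refine Finset.sum_congr rfl fun F _ => ?_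
      by_cases c : i ∈ F.1
      · have : K.1 ⊆ F.1 := hKm _ F.2.2 (Finset.singleton_subset_iff.2 c)
        rw [if_pos c, if_pos this, MvPolynomial.aeval_X]
      · have : ¬ K.1 ⊆ F.1 := fun h => c (h hiK)
        rw [if_neg c, if_neg this, map_zero]
    rw [h']
    exact (Ideal.neg_mem_iff _).2 (atom_mem_annH K (hKr.trans (hloopless i)))

theorem exists_deg {α : Type} [Fintype α] [DecidableEq α] {rk : Finset α → ℕ}
    (hM : IsMatroidRank rk) (hloopless : ∀ e : α, rk {e} = 1) (T : NonemptyFlat rk)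
    (hT : T.1 = Finset.univ) {r : ℕ} (hr : 1 ≤ r) (hrank : rk Finset.univ = r) :
    ∃ deg : (MvPolynomial (NonemptyFlat rk) ℚ ⧸ chowIdealQ rk) →ₗ[ℚ] ℚ,
      deg ((- Ideal.Quotient.mk (chowIdealQ rk) (MvPolynomial.X T)) ^ (r - 1)) = 1 := by
  let f : MvPolynomial (NonemptyFlat rk) ℚ →ₗ[ℚ] ℚ :=
    degH rk ∘ₗ (MvPolynomial.aeval (zz rk)).toLinearMap
  have hf : (chowIdealQ rk).restrictScalars ℚ ≤ LinearMap.ker f := by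
    intro p hp
    have := chowIdeal_le hM hloopless hp
    have h1 := this 1
    rw [one_mul] at h1
    exact h1
  refine ⟨((chowIdealQ rk).restrictScalars ℚ).liftQ f hf ∘ₗ
    (Submodule.Quotient.restrictScalarsEquiv ℚ (chowIdealQ rk)).symm.toLinearMap, ?_⟩
  have hval : ∀ p, (((chowIdealQ rk).restrictScalars ℚ).liftQ f hf ∘ₗ
    (Submodule.Quotient.restrictScalarsEquiv ℚ (chowIdealQ rk)).symm.toLinearMap)
      (Ideal.Quotient.mk (chowIdealQ rk) p) = f p := by
    intro p; rfl
  rw [← map_neg, ← map_pow, hval]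
  have hz : - zz rk T = MvPolynomial.X T := by
    have h := zz_sum rk T
    rw [Finset.sum_eq_single T] at h
    · rw [if_pos (Finset.Subset.refl _)] at h
      rw [h, neg_neg]
    · intro G _ hG
      rw [if_neg]
      intro hs
      exact hG (Subtype.ext (by rw [hT] at hs ⊢; exact Finset.univ_subset_iff.1 hs))
    · simp
  have h1 : f ((- MvPolynomial.X T) ^ (r - 1)) = degH rk (MvPolynomial.X T ^ (r - 1)) := by
    change degH rk ((MvPolynomial.aeval (zz rk)) ((- MvPolynomial.X T) ^ (r - 1))) = _
    rw [map_pow, map_neg, MvPolynomial.aeval_X, hz]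
  rw [h1, MvPolynomial.X_pow_eq_monomial, degH_monomial, if_pos]
  intro A hA
  by_cases hTA : T ∈ A
  · have e1 : ∑ F ∈ A, (Finsupp.single T (r - 1)) F = r - 1 := by
      rw [Finset.sum_eq_single_of_mem T hTA]
      · simp
      · intro b _ hb; exact Finsupp.single_eq_of_ne hb
    have e2 : (A.biUnion fun F => F.1) = Finset.univ := by
      apply Finset.univ_subset_iff.1
      rw [← hT]
      exact Finset.subset_biUnion_of_mem (fun F : NonemptyFlat rk => F.1) hTA
    rw [e1, e2, hrank]; omega
  · have e1 : ∑ F ∈ A, (Finsupp.single T (r - 1)) F = 0 := by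
      apply Finset.sum_eq_zero
      intro b hb
      apply Finsupp.single_eq_of_ne
      rintro rfl; exact hTA hb
    obtain ⟨F, hF⟩ := hA
    obtain ⟨i, hi⟩ := F.2.1
    have : rk {i} ≤ rk (A.biUnion fun F => F.1) := hM.2.1 _ _
      (Finset.singleton_subset_iff.2 (Finset.mem_biUnion.2 ⟨F, hF, hi⟩))
    rw [hloopless] at this
    rw [e1]; omega

/-! ### Positivity -/

section Positivity

variable {α : Type} [Fintype α] [DecidableEq α] {rk : Finset α → ℕ}

/-- Chains of proper nonempty flats. -/
def PChain (C : Finset (NonemptyFlat rk)) : Prop :=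
  (∀ F ∈ C, ∀ G ∈ C, F.1 ⊆ G.1 ∨ G.1 ⊆ F.1) ∧ ∀ F ∈ C, F.1 ≠ Finset.univ

theorem pchain_avoid {C : Finset (NonemptyFlat rk)}
    (hC : ∀ F ∈ C, ∀ G ∈ C, F.1 ⊆ G.1 ∨ G.1 ⊆ F.1) (X : Finset α) (hX : X.Nonempty)
    (hs : ∀ F ∈ C, F.1 ⊂ X) : ∃ e ∈ X, ∀ F ∈ C, e ∉ F.1 := by
  obtain ⟨e, he, h⟩ := exists_avoid (C.image fun F => F.1) X hX
    (by
      intro S hS T hT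
      obtain ⟨S', hS', rfl⟩ := Finset.mem_image.1 hS
      obtain ⟨T', hT', rfl⟩ := Finset.mem_image.1 hT
      exact hC S' hS' T' hT')
    (by
      intro S hS
      obtain ⟨S', hS', rfl⟩ := Finset.mem_image.1 hS
      exact hs S' hS')
  exact ⟨e, he, fun F hF => h _ (Finset.mem_image_of_mem _ hF)⟩

theorem rk_pos (hM : IsMatroidRank rk) (hloopless : ∀ e : α, rk {e} = 1) {X : Finset α}
    (hX : X.Nonempty) : 1 ≤ rk X := by
  obtain ⟨i, hi⟩ := hX
  rw [← hloopless i]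
  exact hM.2.1 _ _ (Finset.singleton_subset_iff.2 hi)

theorem chain_card (hM : IsMatroidRank rk) (hloopless : ∀ e : α, rk {e} = 1)
    {C : Finset (NonemptyFlat rk)}
    (hC : ∀ F ∈ C, ∀ G ∈ C, F.1 ⊆ G.1 ∨ G.1 ⊆ F.1) (X : Finset α) (hX : X.Nonempty)
    (hs : ∀ F ∈ C, F.1 ⊂ X) : C.card + 1 ≤ rk X := by
  have h1 : C.card ≤ (Finset.Ico 1 (rk X)).card := by
    refine Finset.card_le_card_of_injOn (fun F => rk F.1) ?_ ?_
    · intro F hF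
      exact Finset.mem_coe.2 (Finset.mem_Ico.2
        ⟨rk_pos hM hloopless F.2.1, flat_lt hM F.2.2 (hs F hF)⟩)
    · intro F hF G hG hFG
      by_contra hne
      have hne' : F.1 ≠ G.1 := fun h => hne (Subtype.ext h)
      dsimp only at hFG
      rcases hC F hF G hG with h | h
      · have := flat_lt hM F.2.2 (Finset.ssubset_iff_subset_ne.2 ⟨h, hne'⟩)
        omega
      · have := flat_lt hM G.2.2 (Finset.ssubset_iff_subset_ne.2 ⟨h, hne'.symm⟩)
        omega
  rw [Nat.card_Ico] at h1
  have := rk_pos hM hloopless hX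
  omega

set_option linter.unusedSectionVars false

variable {A : Type} [CommRing A] [Algebra ℚ A] (z : NonemptyFlat rk → A)

theorem alpha_rep (hlin : ∀ i : α, ∑ F : NonemptyFlat rk, (if i ∈ F.1 then z F else 0) = 0)
    (T : NonemptyFlat rk) (hT : T.1 = Finset.univ) (i : α) :
    - z T = ∑ F : NonemptyFlat rk, if i ∈ F.1 ∧ F.1 ≠ Finset.univ then z F else 0 := by
  have h := hlin i
  rw [← Finset.add_sum_erase _ _ (Finset.mem_univ T)] at h ⊢
  have h1 : i ∈ T.1 := by rw [hT]; exact Finset.mem_univ i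
  rw [if_pos h1] at h
  rw [if_neg (fun h => h.2 hT), zero_add]
  have h2 : ∑ F ∈ Finset.univ.erase T, (if i ∈ F.1 ∧ F.1 ≠ Finset.univ then z F else 0) =
      ∑ F ∈ Finset.univ.erase T, (if i ∈ F.1 then z F else 0) := by
    refine Finset.sum_congr rfl fun F hF => ?_
    have : F.1 ≠ Finset.univ := fun h =>
      Finset.ne_of_mem_erase hF (Subtype.ext (h.trans hT.symm))
    simp only [this, ne_eq, not_false_eq_true, and_true]
  rw [h2]
  exact neg_eq_of_add_eq_zero_right h

theorem vanish (hM : IsMatroidRank rk) 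
    (hinc : ∀ F G : NonemptyFlat rk, ¬ F.1 ⊆ G.1 → ¬ G.1 ⊆ F.1 → z F * z G = 0)
    (hlin : ∀ i : α, ∑ F : NonemptyFlat rk, (if i ∈ F.1 then z F else 0) = 0)
    (T : NonemptyFlat rk) (hT : T.1 = Finset.univ) :
    ∀ (m : ℕ) (F : NonemptyFlat rk), F.1 ≠ Finset.univ → rk Finset.univ ≤ m + rk F.1 →
      z F * (- z T) ^ m = 0 := by
  intro m
  induction m with
  | zero =>
    intro F hF h
    have := flat_lt hM F.2.2 (Finset.ssubset_univ_iff.2 hF)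
    omega
  | succ m ih =>
    intro F hF h
    obtain ⟨i, _, hi⟩ := Finset.exists_of_ssubset (Finset.ssubset_univ_iff.2 hF)
    rw [pow_succ']
    nth_rewrite 1 [alpha_rep z hlin T hT i]
    rw [Finset.sum_mul, Finset.mul_sum]
    refine Finset.sum_eq_zero fun G _ => ?_
    by_cases hG : i ∈ G.1 ∧ G.1 ≠ Finset.univ
    · rw [if_pos hG]
      by_cases hFG : F.1 ⊆ G.1
      · have hlt := flat_lt hM F.2.2 (Finset.ssubset_iff_subset_ne.2
          ⟨hFG, fun h => hi (h ▸ hG.1)⟩)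
        rw [ih G hG.2 (by omega), mul_zero]
      · rw [← mul_assoc, hinc F G hFG (fun h => hi (h hG.1)), zero_mul]
    · rw [if_neg hG, zero_mul, mul_zero]

theorem prod_mul_incomp
    (hinc : ∀ F G : NonemptyFlat rk, ¬ F.1 ⊆ G.1 → ¬ G.1 ⊆ F.1 → z F * z G = 0)
    (C : Finset (NonemptyFlat rk)) (F G : NonemptyFlat rk) (hF : F ∈ C)
    (h1 : ¬ F.1 ⊆ G.1) (h2 : ¬ G.1 ⊆ F.1) : (∏ H ∈ C, z H) * z G = 0 := by
  rw [← Finset.prod_erase_mul _ _ hF, mul_assoc, hinc F G h1 h2, mul_zero]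

theorem flag_eq (hM : IsMatroidRank rk) (hloopless : ∀ e : α, rk {e} = 1)
    (hinc : ∀ F G : NonemptyFlat rk, ¬ F.1 ⊆ G.1 → ¬ G.1 ⊆ F.1 → z F * z G = 0)
    (hlin : ∀ i : α, ∑ F : NonemptyFlat rk, (if i ∈ F.1 then z F else 0) = 0)
    (T : NonemptyFlat rk) (hT : T.1 = Finset.univ) (C : Finset (NonemptyFlat rk)) :
    PChain C → (∀ F ∈ C, rk F.1 ≤ C.card) → ∀ n, n + C.card = rk Finset.univ - 1 →
      (∏ F ∈ C, z F) * (- z T) ^ n = (- z T) ^ (rk Finset.univ - 1) := by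
  induction C using Finset.induction_on_max_value (fun F : NonemptyFlat rk => rk F.1) with
  | empty =>
    intro _ _ n hn
    simp only [Finset.card_empty, add_zero] at hn
    simp [hn]
  | insert F s hFs hmax ih =>
    intro hC hle n hn
    rw [Finset.card_insert_of_notMem hFs] at hle hn
    have hFp : F.1 ≠ Finset.univ := hC.2 F (Finset.mem_insert_self _ _)
    have hsC : PChain s := ⟨fun F' hF' G' hG' => hC.1 F' (Finset.mem_insert_of_mem hF') G'
      (Finset.mem_insert_of_mem hG'), fun F' hF' => hC.2 F' (Finset.mem_insert_of_mem hF')⟩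
    have hlt : ∀ G ∈ s, G.1 ⊂ F.1 := by
      intro G hG
      have hne : G.1 ≠ F.1 := fun h => hFs (by rwa [← Subtype.ext h])
      rcases hC.1 G (Finset.mem_insert_of_mem hG) F (Finset.mem_insert_self _ _) with h | h
      · exact Finset.ssubset_iff_subset_ne.2 ⟨h, hne⟩
      · have h1 := flat_lt hM F.2.2 (Finset.ssubset_iff_subset_ne.2 ⟨h, hne.symm⟩)
        have h2 := hmax G hG
        omega
    have hFr : rk F.1 ≤ s.card + 1 := hle F (Finset.mem_insert_self _ _)
    rw [← ih hsC (fun G hG => by have := flat_lt hM G.2.2 (hlt G hG); omega) (n + 1) (by omega)]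
    obtain ⟨i, hiF, his⟩ := pchain_avoid hsC.1 F.1 F.2.1 hlt
    rw [Finset.prod_insert hFs, pow_succ']
    nth_rewrite 2 [alpha_rep z hlin T hT i]
    rw [Finset.sum_mul, Finset.mul_sum, Finset.sum_eq_single F]
    · rw [if_pos ⟨hiF, hFp⟩]; ring
    · intro G _ hGF
      by_cases hG : i ∈ G.1 ∧ G.1 ≠ Finset.univ
      · rw [if_pos hG]
        by_cases hcomp : ∀ H ∈ s, H.1 ⊆ G.1
        · by_cases hr : rk Finset.univ ≤ n + rk G.1
          · rw [vanish z hM hinc hlin T hT n G hG.2 hr, mul_zero]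
          · exfalso
            have hi : i ∈ F.1 ∩ G.1 := Finset.mem_inter.2 ⟨hiF, hG.1⟩
            have h1 : s.card + 1 ≤ rk (F.1 ∩ G.1) := by
              refine chain_card hM hloopless hsC.1 _ ⟨i, hi⟩ fun H hH => ?_
              exact Finset.ssubset_iff_subset_ne.2
                ⟨Finset.subset_inter (hlt H hH).1 (hcomp H hH), fun h => his H hH (h ▸ hi)⟩
            have hfl := flat_inter hM F.2.2 G.2.2
            have e1 : F.1 ∩ G.1 = F.1 := by
              by_contra hne
              have := flat_lt hM hfl (Finset.ssubset_iff_subset_ne.2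
                ⟨Finset.inter_subset_left, hne⟩)
              omega
            have e2 : F.1 ∩ G.1 = G.1 := by
              by_contra hne
              have := flat_lt hM hfl (Finset.ssubset_iff_subset_ne.2
                ⟨Finset.inter_subset_right, hne⟩)
              omega
            exact hGF (Subtype.ext (e2.symm.trans e1))
        · push Not at hcomp
          obtain ⟨H, hH, hHG⟩ := hcomp
          rw [← mul_assoc, prod_mul_incomp z hinc s H G hH hHG (fun h => his H hH (h hG.1)),
            zero_mul]
      · rw [if_neg hG, zero_mul, mul_zero]
    · simp

/-- Combinatorial nefness. -/
def CNef (D : A) : Prop :=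
  ∀ C : Finset (NonemptyFlat rk), PChain C → ∃ c : NonemptyFlat rk → ℚ, (∀ F, 0 ≤ c F) ∧
    (∀ F ∈ C, c F = 0) ∧ (∀ F, F.1 = Finset.univ → c F = 0) ∧ D = ∑ F, c F • z F

theorem nef_nonneg (hM : IsMatroidRank rk) (hloopless : ∀ e : α, rk {e} = 1)
    (hinc : ∀ F G : NonemptyFlat rk, ¬ F.1 ⊆ G.1 → ¬ G.1 ⊆ F.1 → z F * z G = 0)
    (hlin : ∀ i : α, ∑ F : NonemptyFlat rk, (if i ∈ F.1 then z F else 0) = 0)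
    (T : NonemptyFlat rk) (hT : T.1 = Finset.univ) (deg : A →ₗ[ℚ] ℚ)
    (hdeg : deg ((- z T) ^ (rk Finset.univ - 1)) = 1) :
    ∀ (l : List A) (_ : ∀ D ∈ l, CNef z D) (C : Finset (NonemptyFlat rk)) (_ : PChain C)
      (_ : l.length + C.card = rk Finset.univ - 1), 0 ≤ deg ((∏ F ∈ C, z F) * l.prod) := by
  intro l
  induction l with
  | nil =>
    intro _ C hC hlen
    have h := flag_eq z hM hloopless hinc hlin T hT C hC (fun F hF => by
      have := flat_lt hM F.2.2 (Finset.ssubset_univ_iff.2 (hC.2 F hF))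
      simp only [List.length_nil] at hlen
      omega) 0 (by simpa using hlen)
    rw [pow_zero, mul_one] at h
    rw [List.prod_nil, mul_one, h, hdeg]
    exact zero_le_one
  | cons D l ih =>
    intro hD C hC hlen
    obtain ⟨c, c0, c1, c2, rfl⟩ := hD D List.mem_cons_self C hC
    have e : (∏ F ∈ C, z F) * (List.prod ((∑ F, c F • z F) :: l)) =
        ∑ F, c F • (((∏ F ∈ C, z F) * z F) * l.prod) := by
      rw [List.prod_cons, Finset.sum_mul, Finset.mul_sum]
      refine Finset.sum_congr rfl fun F _ => ?_
      rw [smul_mul_assoc, mul_smul_comm, mul_assoc]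
    rw [e, map_sum]
    refine Finset.sum_nonneg fun F _ => ?_
    rw [map_smul, smul_eq_mul]
    by_cases hFC : F ∈ C
    · rw [c1 F hFC, zero_mul]
    by_cases hFT : F.1 = Finset.univ
    · rw [c2 F hFT, zero_mul]
    refine mul_nonneg (c0 F) ?_
    by_cases hcomp : ∀ G ∈ C, G.1 ⊆ F.1 ∨ F.1 ⊆ G.1
    · have hC' : PChain (insert F C) := by
        constructor
        · intro G hG H hH
          rcases Finset.mem_insert.1 hG with hG | hG
          · rcases Finset.mem_insert.1 hH with hH | hH
            · rw [hG, hH]; exact Or.inl (Finset.Subset.refl _)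
            · rw [hG]; exact (hcomp H hH).symm
          · rcases Finset.mem_insert.1 hH with hH | hH
            · rw [hH]; exact hcomp G hG
            · exact hC.1 G hG H hH
        · intro G hG
          rcases Finset.mem_insert.1 hG with rfl | hG
          · exact hFT
          · exact hC.2 G hG
      have := ih (fun D hD' => hD D (List.mem_cons_of_mem _ hD')) (insert F C) hC' (by
        rw [Finset.card_insert_of_notMem hFC]
        simp only [List.length_cons] at hlen
        omega)
      rwa [Finset.prod_insert hFC, mul_comm (z F)] at this
    · push Not at hcomp
      obtain ⟨G, hG, h1, h2⟩ := hcomp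
      rw [prod_mul_incomp z hinc C G F hG h1 h2, zero_mul, map_zero]

theorem alpha_nef
    (hlin : ∀ i : α, ∑ F : NonemptyFlat rk, (if i ∈ F.1 then z F else 0) = 0)
    (T : NonemptyFlat rk) (hT : T.1 = Finset.univ) : CNef z (- z T) := by
  intro C hC
  obtain ⟨i, _, hi⟩ := pchain_avoid hC.1 Finset.univ (hT ▸ T.2.1)
    (fun F hF => Finset.ssubset_univ_iff.2 (hC.2 F hF))
  refine ⟨fun F => if i ∈ F.1 ∧ F.1 ≠ Finset.univ then 1 else 0, ?_, ?_, ?_, ?_⟩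
  · intro F
    dsimp only
    split_ifs <;> norm_num
  · intro F hF
    exact if_neg fun h => hi F hF h.1
  · intro F hF
    exact if_neg fun h => h.2 hF
  · rw [alpha_rep z hlin T hT i]
    refine Finset.sum_congr rfl fun F _ => ?_
    dsimp only
    by_cases h : i ∈ F.1 ∧ F.1 ≠ Finset.univ
    · rw [if_pos h, if_pos h, one_smul]
    · rw [if_neg h, if_neg h, zero_smul]

theorem D_rep (hlin : ∀ i : α, ∑ F : NonemptyFlat rk, (if i ∈ F.1 then z F else 0) = 0)
    (rkP : Finset α → ℕ) (x : α → ℤ) :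
    ∑ F : NonemptyFlat rk, ((rkP (Finset.univ \ F.1) : ℚ) - (rkP Finset.univ : ℚ)) • z F =
    ∑ F : NonemptyFlat rk, (((rkP (Finset.univ \ F.1) : ℤ) - (rkP Finset.univ : ℤ) +
      ∑ i ∈ F.1, x i : ℤ) : ℚ) • z F := by
  have h : ∑ F : NonemptyFlat rk, ((∑ i ∈ F.1, x i : ℤ) : ℚ) • z F = 0 := by
    have h1 : ∀ F : NonemptyFlat rk, ((∑ i ∈ F.1, x i : ℤ) : ℚ) • z F =
        ∑ i, (x i : ℚ) • (if i ∈ F.1 then z F else 0) := by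
      intro F
      rw [Int.cast_sum, Finset.sum_smul, ← Finset.sum_filter_add_sum_filter_not Finset.univ
        (fun i => i ∈ F.1) (fun i => (x i : ℚ) • (if i ∈ F.1 then z F else 0))]
      rw [Finset.sum_eq_zero (s := Finset.univ.filter fun i => ¬ i ∈ F.1), add_zero]
      · have : (Finset.univ.filter fun i => i ∈ F.1) = F.1 := by ext; simp
        rw [this]
        refine Finset.sum_congr rfl fun i hi => ?_
        rw [if_pos hi]
      · intro i hi
        rw [if_neg (Finset.mem_filter.1 hi).2, smul_zero]
    rw [Finset.sum_congr rfl (fun F _ => h1 F), Finset.sum_comm]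
    refine Finset.sum_eq_zero fun i _ => ?_
    rw [← Finset.smul_sum, hlin i, smul_zero]
  rw [← add_zero (∑ F : NonemptyFlat rk, _), ← h, ← Finset.sum_add_distrib]
  refine Finset.sum_congr rfl fun F _ => ?_
  rw [← add_smul]
  push_cast
  rfl

theorem D_nef (hlin : ∀ i : α, ∑ F : NonemptyFlat rk, (if i ∈ F.1 then z F else 0) = 0)
    {rkP : Finset α → ℕ} (hP : IsPolymatroid rkP) :
    CNef z (∑ F : NonemptyFlat rk,
      ((rkP (Finset.univ \ F.1) : ℚ) - (rkP Finset.univ : ℚ)) • z F) := by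
  intro C hC
  obtain ⟨x, h1, h2, h3⟩ := greedy_univ hP (C.image fun F => F.1) (by
    intro S hS T hT
    obtain ⟨S', hS', rfl⟩ := Finset.mem_image.1 hS
    obtain ⟨T', hT', rfl⟩ := Finset.mem_image.1 hT
    exact hC.1 S' hS' T' hT')
  refine ⟨_, fun F => ?_, fun F hF => ?_, fun F hF => ?_, D_rep z hlin rkP x⟩
  · exact Int.cast_nonneg (h1 F.1)
  · exact Int.cast_eq_zero.2 (h2 F.1 (Finset.mem_image_of_mem _ hF))
  · apply Int.cast_eq_zero.2
    rw [hF, h3, Finset.sdiff_self, hP.1]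
    simp

theorem D_big (hlin : ∀ i : α, ∑ F : NonemptyFlat rk, (if i ∈ F.1 then z F else 0) = 0)
    (T : NonemptyFlat rk) (hT : T.1 = Finset.univ)
    {rkP : Finset α → ℕ} (hP : IsPolymatroid rkP)
    (hstrict : ∀ S : Finset α, S.Nonempty → S ≠ Finset.univ →
      rkP Finset.univ < rkP S + rkP (Finset.univ \ S)) :
    ∃ (N : ℚ) (d : NonemptyFlat rk → ℚ), 0 < N ∧ (∀ F, 0 ≤ d F) ∧
      (∀ F, F.1 = Finset.univ → d F = 0) ∧
      N • (∑ F : NonemptyFlat rk,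
        ((rkP (Finset.univ \ F.1) : ℚ) - (rkP Finset.univ : ℚ)) • z F) =
        - z T + ∑ F, d F • z F := by
  have hx : ∀ S : Finset α, ∃ x : α → ℤ,
      (∀ F : Finset α, 0 ≤ (rkP (Finset.univ \ F) : ℤ) - rkP Finset.univ + ∑ i ∈ F, x i) ∧
      (∀ F ∈ ({Finset.univ \ S} : Finset (Finset α)),
        (rkP (Finset.univ \ F) : ℤ) - rkP Finset.univ + ∑ i ∈ F, x i = 0) ∧
      ∑ i, x i = rkP Finset.univ := fun S => greedy_univ hP {Finset.univ \ S} (by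
        intro S hS T hT
        rw [Finset.mem_singleton.1 hS, Finset.mem_singleton.1 hT]
        exact Or.inl (Finset.Subset.refl _))
  choose x h1 h2 h3 using hx
  obtain ⟨i, _⟩ := T.2.1
  let c : Finset α → Finset α → ℤ := fun S F =>
    (rkP (Finset.univ \ F) : ℤ) - rkP Finset.univ + ∑ i ∈ F, x S i
  have hcpos : ∀ F : Finset α, F.Nonempty → F ≠ Finset.univ → 1 ≤ ∑ S, c S F := by
    intro F hF hF'
    have g1 : c F F ≤ ∑ S, c S F :=
      Finset.single_le_sum (f := fun S => c S F) (fun S _ => h1 S F) (Finset.mem_univ F)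
    have g2 := h2 F (Finset.univ \ F) (Finset.mem_singleton_self _)
    have g3 : ∑ i ∈ Finset.univ \ F, x F i + ∑ i ∈ F, x F i = rkP Finset.univ := by
      rw [← h3 F]; exact Finset.sum_sdiff (Finset.subset_univ F)
    have g4 := hstrict F hF hF'
    have g5 : Finset.univ \ (Finset.univ \ F) = F := by simp
    rw [g5] at g2
    have g6 : c F F = (rkP (Finset.univ \ F) : ℤ) - rkP Finset.univ + ∑ i ∈ F, x F i := rfl
    omega
  have hcuniv : ∑ S, c S Finset.univ = 0 := by
    refine Finset.sum_eq_zero fun S _ => ?_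
    simp only [c]
    rw [h3 S, Finset.sdiff_self, hP.1]
    simp
  refine ⟨(Finset.univ : Finset (Finset α)).card,
    fun F => ((∑ S, c S F.1 : ℤ) : ℚ) - if i ∈ F.1 ∧ F.1 ≠ Finset.univ then 1 else 0,
    ?_, ?_, ?_, ?_⟩
  · exact Nat.cast_pos.2 (Finset.card_pos.2 ⟨∅, Finset.mem_univ _⟩)
  · intro F
    dsimp only
    by_cases hF : F.1 = Finset.univ
    · rw [hF, hcuniv]; simp
    · have := hcpos F.1 F.2.1 hF
      have h' : (1 : ℚ) ≤ ((∑ S, c S F.1 : ℤ) : ℚ) := by exact_mod_cast this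
      split_ifs <;> linarith
  · intro F hF
    dsimp only
    rw [hF, hcuniv]; simp
  · have e1 : ∑ F : NonemptyFlat rk, ((((∑ S, c S F.1 : ℤ) : ℚ) -
        if i ∈ F.1 ∧ F.1 ≠ Finset.univ then 1 else 0) : ℚ) • z F =
        ∑ F : NonemptyFlat rk, ((∑ S, c S F.1 : ℤ) : ℚ) • z F - (- z T) := by
      rw [alpha_rep z hlin T hT i, ← Finset.sum_sub_distrib]
      refine Finset.sum_congr rfl fun F _ => ?_
      rw [sub_smul]
      congr 1
      split_ifs <;> simp
    rw [e1, add_sub_cancel, Nat.cast_smul_eq_nsmul, ← Finset.sum_const]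
    rw [Finset.sum_congr rfl (fun S _ => D_rep z hlin rkP (x S)), Finset.sum_comm]
    refine Finset.sum_congr rfl fun F _ => ?_
    rw [← Finset.sum_smul, ← Int.cast_sum]

theorem D_pos (hM : IsMatroidRank rk) (hloopless : ∀ e : α, rk {e} = 1)
    (hinc : ∀ F G : NonemptyFlat rk, ¬ F.1 ⊆ G.1 → ¬ G.1 ⊆ F.1 → z F * z G = 0)
    (hlin : ∀ i : α, ∑ F : NonemptyFlat rk, (if i ∈ F.1 then z F else 0) = 0)
    (T : NonemptyFlat rk) (hT : T.1 = Finset.univ) (deg : A →ₗ[ℚ] ℚ)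
    (hdeg : deg ((- z T) ^ (rk Finset.univ - 1)) = 1)
    (D : A) (hD : CNef z D) (N : ℚ) (d : NonemptyFlat rk → ℚ) (hN : 0 < N) (hd : ∀ F, 0 ≤ d F)
    (hd' : ∀ F, F.1 = Finset.univ → d F = 0) (hND : N • D = - z T + ∑ F, d F • z F) :
    ∀ b a : ℕ, b + a = rk Finset.univ - 1 → 0 < deg (D ^ b * (- z T) ^ a) := by
  intro b
  induction b with
  | zero =>
    intro a ha
    rw [zero_add] at ha
    rw [pow_zero, one_mul, ha, hdeg]
    exact zero_lt_one
  | succ b ih =>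
    intro a ha
    have h1 := ih (a + 1) (by omega)
    have e : N • (D ^ (b + 1) * (- z T) ^ a) = D ^ b * (- z T) ^ (a + 1) +
        ∑ F, d F • (z F * (D ^ b * (- z T) ^ a)) := by
      have : N • (D ^ (b + 1) * (- z T) ^ a) = (N • D) * (D ^ b * (- z T) ^ a) := by
        rw [smul_mul_assoc]; congr 1; ring
      rw [this, hND, add_mul, Finset.sum_mul]
      congr 1
      · ring
      · refine Finset.sum_congr rfl fun F _ => ?_
        rw [smul_mul_assoc]
    have h2 : 0 ≤ deg (∑ F, d F • (z F * (D ^ b * (- z T) ^ a))) := by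
      rw [map_sum]
      refine Finset.sum_nonneg fun F _ => ?_
      rw [map_smul, smul_eq_mul]
      by_cases hF : F.1 = Finset.univ
      · rw [hd' F hF, zero_mul]
      · refine mul_nonneg (hd F) ?_
        have := nef_nonneg z hM hloopless hinc hlin T hT deg hdeg
          (List.replicate b D ++ List.replicate a (- z T)) (by
            intro E hE
            rcases List.mem_append.1 hE with h | h
            · rw [List.eq_of_mem_replicate h]; exact hD
            · rw [List.eq_of_mem_replicate h]; exact alpha_nef z hlin T hT) {F}
          ⟨by
            intro G hG H hH
            rw [Finset.mem_singleton.1 hG, Finset.mem_singleton.1 hH]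
            exact Or.inl (Finset.Subset.refl _), by
            intro G hG
            rw [Finset.mem_singleton.1 hG]; exact hF⟩ (by
            simp only [List.length_append, List.length_replicate, Finset.card_singleton]
            omega)
        rwa [List.prod_append, List.prod_replicate, List.prod_replicate,
          Finset.prod_singleton] at this
    have h3 := congrArg deg e
    rw [map_smul, smul_eq_mul, map_add] at h3
    have h4 : 0 < N * deg (D ^ (b + 1) * (- z T) ^ a) := by rw [h3]; linarith
    exact (mul_pos_iff_of_pos_left hN).1 h4

end Positivity

/-- For a loopless matroid `M` of rank `r ≥ 1` on `E` and a polymatroid `P` on `E` whose base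
polytope is full dimensional (its affine hull has dimension `|E| - 1`), the divisor class
`D = Σ_F (rk_P(E∖F) - rk_P(E)) z_F` satisfies `D^{r-1} ≠ 0` in the Chow ring `A(M)_ℚ`. -/
theorem numerical_dimension_of_full_dimensional_polymatroid
    {α : Type} [Fintype α] [DecidableEq α] {r : ℕ}
    (rk : Finset α → ℕ) (hM : IsMatroidRank rk) (hloopless : ∀ e : α, rk {e} = 1)
    (hrank : rk Finset.univ = r) (hr : 1 ≤ r)
    (rkP : Finset α → ℕ) (hP : IsPolymatroid rkP)
    (hfull : Module.finrank ℝ (affineSpan ℝ (basePolytope rkP)).direction =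
      Fintype.card α - 1) :
    (Ideal.Quotient.mk (chowIdealQ rk)
        (∑ F : NonemptyFlat rk,
          ((rkP (Finset.univ \ F.1) : ℚ) - (rkP Finset.univ : ℚ)) •
            MvPolynomial.X F)) ^ (r - 1) ≠ 0 := by
  subst hrank
  have hne : (Finset.univ : Finset α).Nonempty := by
    rcases (Finset.univ : Finset α).eq_empty_or_nonempty with h | h
    · rw [h, hM.1] at hr; omega
    · exact h
  let T : NonemptyFlat rk := ⟨Finset.univ, hne, fun e _ => Finset.mem_univ e⟩
  obtain ⟨deg, hdeg⟩ := exists_deg hM hloopless T rfl hr rfl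
  let z : NonemptyFlat rk → (MvPolynomial (NonemptyFlat rk) ℚ ⧸ chowIdealQ rk) :=
    fun F => Ideal.Quotient.mk (chowIdealQ rk) (MvPolynomial.X F)
  have hinc : ∀ F G : NonemptyFlat rk, ¬ F.1 ⊆ G.1 → ¬ G.1 ⊆ F.1 → z F * z G = 0 := by
    intro F G h1 h2
    simp only [z]
    rw [← map_mul]
    exact Ideal.Quotient.eq_zero_iff_mem.2 (Ideal.subset_span (Or.inl ⟨F, G, h1, h2, rfl⟩))
  have hlin : ∀ i : α, ∑ F : NonemptyFlat rk, (if i ∈ F.1 then z F else 0) = 0 := by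
    intro i
    have h : Ideal.Quotient.mk (chowIdealQ rk) (∑ F : NonemptyFlat rk,
        if i ∈ F.1 then MvPolynomial.X F else 0) = 0 :=
      Ideal.Quotient.eq_zero_iff_mem.2 (Ideal.subset_span (Or.inr ⟨i, rfl⟩))
    rw [map_sum] at h
    refine Eq.trans ?_ h
    refine Finset.sum_congr rfl fun F _ => ?_
    split_ifs
    · rfl
    · rw [map_zero]
  have hDeq : Ideal.Quotient.mk (chowIdealQ rk) (∑ F : NonemptyFlat rk,
      ((rkP (Finset.univ \ F.1) : ℚ) - (rkP Finset.univ : ℚ)) • MvPolynomial.X F) =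
      ∑ F : NonemptyFlat rk,
        ((rkP (Finset.univ \ F.1) : ℚ) - (rkP Finset.univ : ℚ)) • z F := by
    rw [map_sum]
    rfl
  obtain ⟨N, d, hN, hd, hd', hND⟩ := D_big z hlin T rfl hP (full_strict hfull)
  have hpos := D_pos z hM hloopless hinc hlin T rfl deg hdeg _ (D_nef z hlin hP) N d hN hd hd' hND
    (rk Finset.univ - 1) 0 (by omega)
  rw [pow_zero, mul_one, ← hDeq] at hpos
  intro h0
  rw [h0, map_zero] at hpos
  exact lt_irrefl _ hpos
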